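/- The path graph P_7 on 7 vertices satisfies ϖ(P_7) = 2: there is no Marcello step from P_7 to the complete graph K_7, but there is a Marcello chain of length 2 from P_7 to K_7. -/

import Mathlib

open SimpleGraph

attribute [local instance] Classical.propDecidable

/-- The degree of a vertex. -/
noncomputable def mdeg {V : Type*} (G : SimpleGraph V) (v : V) : ℕ :=
  (G.neighborSet v).ncard

/-- `G'` is obtained from `G` by a Marcello step. -/
def MarcelloStep {V : Type*} [Fintype V] (G G' : SimpleGraph V) : Prop :=
  G ≤ G' ∧ ∃ f : Sym2 V → V,
    (∀ e ∈ G'.edgeSet \ G.edgeSet, f e ∈ e) ∧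
    (∀ v : V, (∃ e ∈ G'.edgeSet \ G.edgeSet, f e = v) →
        0 < mdeg G v ∧ mdeg G v < Fintype.card V - 1) ∧
    (∀ v : V, ((G'.edgeSet \ G.edgeSet) ∩ {e | f e = v}).ncard ≤ mdeg G v)

/-- There is a Marcello chain of length `k` from `G` to `H`. -/
def MarcelloChain {V : Type*} [Fintype V] (G H : SimpleGraph V) (k : ℕ) : Prop :=
  ∃ c : ℕ → SimpleGraph V, c 0 = G ∧ c k = H ∧ ∀ i < k, MarcelloStep (c i) (c (i + 1))

/-- The Marcello number `ϖ(G)`. -/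
noncomputable def marcelloNumber {V : Type*} [Fintype V] (G : SimpleGraph V) : ℕ :=
  sInf {k | MarcelloChain G (⊤ : SimpleGraph V) k}

/-- The sum of degrees over vertices `v` with `0 < deg v < n - 1`. -/
noncomputable def marcelloSum {V : Type*} [Fintype V] (G : SimpleGraph V) : ℕ :=
  ∑ v ∈ Finset.univ.filter
      (fun v => 0 < mdeg G v ∧ mdeg G v < Fintype.card V - 1), mdeg G v

/-!
A vertex initiates at most as many new edges as its degree, so by the handshake lemma a Marcello
step at most triples the number of edges. The path on `n` vertices has `n - 1` edges, so completing
it in `k` steps forces `n ≤ 2 * 3 ^ k`; for `n = 7` this excludes `k ≤ 1`.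

Conversely, every pair of distinct residues modulo `7` has the form `{v, v + d}` with
`d ∈ {1, 2, 3}`. Let each inner vertex `v` of the path initiate its edges to `v + 2` and `v + 3`,
and each of the two endpoints its edge to `v + 2`. Only the edges `{6, 0}`, `{0, 3}` and `{6, 2}`
are then missing, and a second step adds them.
-/

-- The proofs by `decide` would get stuck on classical instances.
attribute [-instance] Classical.propDecidable

theorem mdeg_eq_degree {V : Type*} (G : SimpleGraph V) (v : V) [Fintype (G.neighborSet v)] :
    mdeg G v = G.degree v := by
  rw [mdeg, Set.ncard_eq_toFinset_card', Set.toFinset_card, card_neighborSet_eq_degree]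

/-- The graph obtained from `G` when every vertex `v` initiates edges to the vertices in `t v`.
Members of `t v` that equal `v` or are already adjacent to it have no effect. -/
def initiate {V : Type*} (G : SimpleGraph V) (t : V → Finset V) : SimpleGraph V :=
  G ⊔ fromRel fun v w => w ∈ t v

instance {V : Type*} [DecidableEq V] (G : SimpleGraph V) [DecidableRel G.Adj]
    (t : V → Finset V) : DecidableRel (initiate G t).Adj :=
  inferInstanceAs (DecidableRel (G ⊔ fromRel fun v w => w ∈ t v).Adj)

section Step

variable {V : Type*} [Fintype V] {G G' : SimpleGraph V}

theorem sum_mdeg_eq_two_mul_ncard_edgeSet (G : SimpleGraph V) :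
    ∑ v, mdeg G v = 2 * G.edgeSet.ncard := by
  classical
  simp only [mdeg_eq_degree, sum_degrees_eq_twice_card_edges, ← coe_edgeFinset,
    Set.ncard_coe_finset]

theorem mdeg_lt_card_sub_one_of_not_adj {v w : V} (hne : v ≠ w) (hvw : ¬ G.Adj v w) :
    mdeg G v < Fintype.card V - 1 := by
  have hssub : G.neighborSet v ⊂ {v}ᶜ :=
    (Set.ssubset_iff_of_subset fun u hu => (G.ne_of_adj hu).symm).mpr ⟨w, hne.symm, hvw⟩
  calc mdeg G v
      < ({v}ᶜ : Set V).ncard := Set.ncard_lt_ncard hssub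
    _ = Fintype.card V - 1 := by rw [Set.ncard_compl, Set.ncard_singleton, Nat.card_eq_fintype_card]

/-- The other endpoint of a new edge is a non-neighbour of its initiator, which keeps the degree of
the initiator below `n - 1`; the count of initiated edges keeps it positive. -/
theorem marcelloStep_iff : MarcelloStep G G' ↔ G ≤ G' ∧ ∃ f : Sym2 V → V,
    (∀ e ∈ G'.edgeSet \ G.edgeSet, f e ∈ e) ∧
    ∀ v, ((G'.edgeSet \ G.edgeSet) ∩ {e | f e = v}).ncard ≤ mdeg G v := by
  refine ⟨fun ⟨hle, f, hmem, _, hcount⟩ => ⟨hle, f, hmem, hcount⟩,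
    fun ⟨hle, f, hmem, hcount⟩ => ⟨hle, f, hmem, ?_, hcount⟩⟩
  rintro v ⟨e, he, hv⟩
  obtain ⟨w, rfl⟩ : v ∈ e := hv ▸ hmem e he
  have hpos : 0 < ((G'.edgeSet \ G.edgeSet) ∩ {e | f e = v}).ncard :=
    (Set.ncard_pos).mpr ⟨s(v, w), he, hv⟩
  exact ⟨hpos.trans_le (hcount v), mdeg_lt_card_sub_one_of_not_adj (G'.ne_of_adj he.1) he.2⟩

theorem MarcelloStep.ncard_edgeSet_le (h : MarcelloStep G G') :
    G'.edgeSet.ncard ≤ 3 * G.edgeSet.ncard := by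
  obtain ⟨-, f, -, hcount⟩ := marcelloStep_iff.mp h
  have hnew : (G'.edgeSet \ G.edgeSet).ncard ≤ 2 * G.edgeSet.ncard :=
    calc (G'.edgeSet \ G.edgeSet).ncard
        = (⋃ v ∈ Finset.univ, (G'.edgeSet \ G.edgeSet) ∩ {e | f e = v}).ncard := by
          congr 1; ext e; simp
      _ ≤ ∑ v, ((G'.edgeSet \ G.edgeSet) ∩ {e | f e = v}).ncard :=
          Finset.set_ncard_biUnion_le _ _
      _ ≤ ∑ v, mdeg G v := Finset.sum_le_sum fun v _ => hcount v
      _ = 2 * G.edgeSet.ncard := sum_mdeg_eq_two_mul_ncard_edgeSet G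
  have hsplit := Set.ncard_le_ncard_sdiff_add_ncard G'.edgeSet G.edgeSet
  omega

theorem marcelloStep_initiate {t : V → Finset V} (ht : ∀ v, (t v).card ≤ mdeg G v) :
    MarcelloStep G (initiate G t) := by
  have horient : ∀ e : Sym2 V, ∃ v w, s(v, w) = e ∧
      (e ∈ (initiate G t).edgeSet \ G.edgeSet → w ∈ t v) := by
    rintro ⟨v, w⟩
    by_cases hv : v ∈ t w
    · exact ⟨w, v, Sym2.eq_swap, fun _ => hv⟩
    · refine ⟨v, w, rfl, ?_⟩
      rintro ⟨hG | ⟨-, hw | hv'⟩, hnG⟩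
      exacts [absurd hG hnG, hw, absurd hv' hv]
  choose f g hfg hg using horient
  refine marcelloStep_iff.mpr
    ⟨le_sup_left, f, fun e _ => Sym2.mem_iff_exists.mpr ⟨g e, (hfg e).symm⟩, fun v => ?_⟩
  calc (((initiate G t).edgeSet \ G.edgeSet) ∩ {e | f e = v}).ncard
      ≤ ((fun w => s(v, w)) '' (t v : Set V)).ncard := by
        refine Set.ncard_le_ncard ?_
        rintro e ⟨he, rfl⟩
        exact ⟨g e, hg e he, hfg e⟩
    _ ≤ (t v : Set V).ncard := Set.ncard_image_le
    _ = (t v).card := Set.ncard_coe_finset _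
    _ ≤ mdeg G v := ht v

end Step

section Chain

variable {V : Type*} [Fintype V] {G H : SimpleGraph V} {k : ℕ}

theorem marcelloChain_zero : MarcelloChain G H 0 ↔ G = H :=
  ⟨fun ⟨_, hG, hH, _⟩ => hG.symm.trans hH, fun h => ⟨fun _ => G, rfl, h, by simp⟩⟩

theorem marcelloChain_succ :
    MarcelloChain G H (k + 1) ↔ ∃ G', MarcelloStep G G' ∧ MarcelloChain G' H k := by
  constructor
  · rintro ⟨c, rfl, hH, hstep⟩
    exact ⟨c 1, hstep 0 k.succ_pos, fun i => c (i + 1), rfl, hH,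
      fun i hi => hstep (i + 1) (Nat.succ_lt_succ hi)⟩
  · rintro ⟨_, hfirst, c, rfl, hH, hstep⟩
    refine ⟨fun | 0 => G | i + 1 => c i, rfl, hH, fun i hi => ?_⟩
    cases i with
    | zero => exact hfirst
    | succ i => exact hstep i (Nat.lt_of_succ_lt_succ hi)

theorem marcelloChain_one : MarcelloChain G H 1 ↔ MarcelloStep G H := by
  simp [marcelloChain_succ, marcelloChain_zero]

theorem MarcelloChain.ncard_edgeSet_le (h : MarcelloChain G H k) :
    H.edgeSet.ncard ≤ 3 ^ k * G.edgeSet.ncard := by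
  induction k generalizing G with
  | zero => simp [marcelloChain_zero.mp h]
  | succ k ih =>
    obtain ⟨G', hstep, hchain⟩ := marcelloChain_succ.mp h
    calc H.edgeSet.ncard
        ≤ 3 ^ k * G'.edgeSet.ncard := ih hchain
      _ ≤ 3 ^ k * (3 * G.edgeSet.ncard) := Nat.mul_le_mul_left _ hstep.ncard_edgeSet_le
      _ = 3 ^ (k + 1) * G.edgeSet.ncard := by ring

theorem MarcelloChain.card_choose_two_le (h : MarcelloChain G ⊤ k) :
    (Fintype.card V).choose 2 ≤ 3 ^ k * G.edgeSet.ncard := by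
  classical
  rw [← card_edgeFinset_top_eq_card_choose_two, ← Set.ncard_coe_finset, coe_edgeFinset]
  exact h.ncard_edgeSet_le

end Chain

section Path

theorem edgeSet_pathGraph_succ (n : ℕ) :
    (pathGraph (n + 1)).edgeSet = Set.range fun i : Fin n => s(i.castSucc, i.succ) := by
  ext e
  induction e with | _ u v
  rw [mem_edgeSet, pathGraph_adj]
  constructor
  · rintro (h | h)
    · exact ⟨⟨u, by omega⟩, by simp [h]⟩
    · exact ⟨⟨v, by omega⟩, by simp [Fin.ext_iff, h]⟩
  · rintro ⟨i, hi⟩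
    simp only [Sym2.eq_iff, Fin.ext_iff, Fin.val_castSucc, Fin.val_succ] at hi
    omega

theorem ncard_edgeSet_pathGraph_succ (n : ℕ) : (pathGraph (n + 1)).edgeSet.ncard = n := by
  have hinj : Function.Injective fun i : Fin n => s(i.castSucc, i.succ) := by
    intro i j h
    simp only [Sym2.eq_iff, Fin.ext_iff, Fin.val_castSucc, Fin.val_succ] at h
    omega
  rw [edgeSet_pathGraph_succ, Set.ncard_range_of_injective hinj, Nat.card_fin]

theorem le_two_mul_three_pow_of_marcelloChain_pathGraph {n k : ℕ}
    (h : MarcelloChain (pathGraph n) ⊤ k) : n ≤ 2 * 3 ^ k := by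
  obtain _ | n := n
  · exact Nat.zero_le _
  have hedges : (n + 1).choose 2 ≤ 3 ^ k * n := by
    simpa [ncard_edgeSet_pathGraph_succ] using h.card_choose_two_le
  obtain rfl | hn := n.eq_zero_or_pos
  · have hpow : 0 < 3 ^ k := by positivity
    omega
  have htwo : (n + 1) * n = (n + 1).choose 2 * 2 := by
    simpa using Nat.add_one_mul_choose_eq n 1
  refine Nat.le_of_mul_le_mul_right ?_ hn
  calc (n + 1) * n
      = (n + 1).choose 2 * 2 := htwo
    _ ≤ 3 ^ k * n * 2 := Nat.mul_le_mul_right 2 hedges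
    _ = 2 * 3 ^ k * n := by ring

/-- The vertices to which `v` initiates edges in the first step of the chain completing `P_7`;
addition is modulo `7`. -/
def pathSevenTargets (v : Fin 7) : Finset (Fin 7) :=
  if v = 0 ∨ v = 6 then {v + 2} else {v + 2, v + 3}

/-- The vertices to which `v` initiates edges in the second step of the chain completing `P_7`. -/
def pathSevenRemainingTargets (v : Fin 7) : Finset (Fin 7) :=
  if v = 0 ∨ v = 2 then {6} else if v = 3 then {0} else ∅

instance (n : ℕ) : DecidableRel (pathGraph n).Adj :=
  fun _ _ => decidable_of_iff _ pathGraph_adj.symm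

theorem marcelloStep_pathGraph_seven_initiate :
    MarcelloStep (pathGraph 7) (initiate (pathGraph 7) pathSevenTargets) :=
  marcelloStep_initiate fun v => by
    rw [mdeg_eq_degree]
    revert v
    decide

theorem marcelloStep_initiate_pathSevenTargets_top :
    MarcelloStep (initiate (pathGraph 7) pathSevenTargets) ⊤ := by
  have hcomplete :
      initiate (initiate (pathGraph 7) pathSevenTargets) pathSevenRemainingTargets = ⊤ := by
    ext v w
    revert v w
    decide
  rw [← hcomplete]
  refine marcelloStep_initiate fun v => ?_
  rw [mdeg_eq_degree]
  revert v
  decide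

theorem marcelloChain_pathGraph_seven_top_two : MarcelloChain (pathGraph 7) ⊤ 2 :=
  marcelloChain_succ.mpr ⟨_, marcelloStep_pathGraph_seven_initiate,
    marcelloChain_one.mpr marcelloStep_initiate_pathSevenTargets_top⟩

end Path

/-- `ϖ(P_7) = 2`: no single Marcello step completes `P_7`, but there is a
Marcello chain of length `2` from `P_7` to `K_7`. -/
theorem marcello_path_seven :
    ¬ MarcelloStep (SimpleGraph.pathGraph 7) (⊤ : SimpleGraph (Fin 7)) ∧
      MarcelloChain (SimpleGraph.pathGraph 7) (⊤ : SimpleGraph (Fin 7)) 2 ∧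
      marcelloNumber (SimpleGraph.pathGraph 7) = 2 := by
  have hlower : ∀ k, MarcelloChain (pathGraph 7) ⊤ k → 2 ≤ k := fun k hk => by
    by_contra! hlt
    have hbound := le_two_mul_three_pow_of_marcelloChain_pathGraph hk
    interval_cases k <;> omega
  have hchain := marcelloChain_pathGraph_seven_top_two
  exact ⟨fun hstep => absurd (hlower 1 (marcelloChain_one.mpr hstep)) (by omega), hchain,
    le_antisymm (Nat.sInf_le hchain) (le_csInf ⟨2, hchain⟩ hlower)⟩
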